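/- Let $d \ge 1$, $m \in (0,\infty)\setminus\{1\}$, $0 < \alpha \le d$, $0 \le s < d/2$, and $\beta \ge 1$ with $d - 2s > \frac{\alpha}{\beta}$. Then there exist an $\alpha$-dimensional probability measure $\mu$ supported in the unit ball of $\mathbb{R}^d$, an orthonormal system $(f_j)_j$ in $\dot H^s(\mathbb{R}^d)$, and a sequence $(\lambda_j)_j \in \ell^\beta$ such that $\big\| \sum_j \lambda_j |e^{it(-\Delta)^{m/2}} f_j|^2 \big\|_{L_x^1(d\mu) L_t^\infty(0,1)} \lesssim \|\lambda\|_{\ell^\beta}$ fails. Equivalently, $d - 2s \le \frac{\alpha}{\beta}$ is necessary for the maximal estimate. -/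

import Mathlib

open MeasureTheory Set Complex
open scoped ENNReal NNReal RealInnerProductSpace

/-- The fractional Schrödinger evolution on the Fourier side:
`u(t,x) = ∫ e^{i(x·ξ + t|ξ|^m)} g(ξ) dξ`, where `g` is the Fourier transform of the data. -/
noncomputable def fracEvol (d : ℕ) (m : ℝ) (g : EuclideanSpace ℝ (Fin d) → ℂ)
    (t : ℝ) (x : EuclideanSpace ℝ (Fin d)) : ℂ :=
  ∫ ξ : EuclideanSpace ℝ (Fin d),
    Complex.exp (Complex.I * ((⟪x, ξ⟫ + t * ‖ξ‖ ^ m : ℝ) : ℂ)) * g ξ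


theorem assembly_lemma {d : ℕ} (E : ℕ → Set (EuclideanSpace ℝ (Fin d)))
    (hE : ∀ k, MeasurableSet (E k)) (h0 : ∀ k, volume (E k) ≠ 0) (ht : ∀ k, volume (E k) ≠ ∞)
    (hball : ∀ k, E k ⊆ Metric.closedBall 0 1) (A : ℕ → ℝ) (hA : ∀ k, 1 ≤ A k) (α : ℝ)
    (hbd : ∀ k x r, 0 < r → volume (E k ∩ Metric.ball x r) ≤
      ENNReal.ofReal (A k * r ^ α) * volume (E k))
    (ρ : ℕ → EuclideanSpace ℝ (Fin d) → ℝ≥0∞) (hρ : ∀ k, Measurable (ρ k))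
    (hfin : ∀ k x, ρ k x ≠ ∞)
    (hlow : ∀ k, ∀ x ∈ E k, ENNReal.ofReal (2 ^ k * A k) ≤ ρ k x)
    (hoff : ∀ i k, i ≠ k → ∫⁻ x in E i, ρ k x ≤ ENNReal.ofReal ((1 / 2) ^ k)) :
    ∃ μ : Measure (EuclideanSpace ℝ (Fin d)), IsProbabilityMeasure μ ∧
      μ (Metric.closedBall (0 : EuclideanSpace ℝ (Fin d)) 1)ᶜ = 0 ∧
      (∃ A : ℝ, 0 < A ∧ ∀ (x : EuclideanSpace ℝ (Fin d)) (r : ℝ), 0 < r →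
        μ (Metric.ball x r) ≤ ENNReal.ofReal (A * r ^ α)) ∧
      (∀ᵐ x ∂μ, ∑' k, ρ k x < ∞) ∧ ∫⁻ x, ∑' k, ρ k x ∂μ = ∞ := by
  have hgeo : ∀ c : ℝ, 0 ≤ c → ∑' k : ℕ, ENNReal.ofReal ((1 / 2) ^ k * c) = ENNReal.ofReal (2 * c) := by
    intro c hc
    rw [← ENNReal.ofReal_tsum_of_nonneg (fun k => by positivity)
      ((summable_geometric_two).mul_right c), tsum_mul_right, tsum_geometric_two]
  set w : ℕ → ℝ≥0∞ := fun k => ENNReal.ofReal ((1 / 2) ^ k / A k) with hw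
  have hApos : ∀ k, 0 < A k := fun k => lt_of_lt_of_le one_pos (hA k)
  set ν : Measure (EuclideanSpace ℝ (Fin d)) :=
    Measure.sum fun k => (w k * (volume (E k))⁻¹) • volume.restrict (E k) with hν
  have hunit : ∀ k, (volume (E k))⁻¹ * volume (E k) = 1 := fun k =>
    ENNReal.inv_mul_cancel (h0 k) (ht k)
  have hνuniv : ν univ = ∑' k, w k := by
    rw [hν, Measure.sum_apply _ MeasurableSet.univ]
    congr 1; ext k
    simp [mul_assoc, hunit]
  have hWtop : ν univ ≠ ∞ := by
    rw [hνuniv]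
    refine ne_top_of_le_ne_top ENNReal.ofReal_ne_top ((ENNReal.tsum_le_tsum ?_).trans (hgeo 1 zero_le_one).le)
    intro k
    apply ENNReal.ofReal_le_ofReal
    rw [mul_one]
    exact div_le_self (by positivity) (hA k)
  have hW0 : ν univ ≠ 0 := by
    rw [hνuniv]
    intro h
    have := ENNReal.tsum_eq_zero.1 h 0
    simp [hw] at this
    linarith [hApos 0]
  have hA' : ∀ k, w k * ENNReal.ofReal (2 ^ k * A k) = 1 := by
    intro k
    rw [hw, ← ENNReal.ofReal_mul (by have := hApos k; positivity), ← ENNReal.ofReal_one]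
    congr 1
    have := (hApos k).ne'
    field_simp
    rw [← mul_pow]; norm_num
  refine ⟨(ν univ)⁻¹ • ν, ⟨?_⟩, ?_, ⟨((ν univ)⁻¹).toReal * 2, ?_, ?_⟩, ?_, ?_⟩
  · simp [ENNReal.inv_mul_cancel hW0 hWtop]
  · have : ν (Metric.closedBall (0 : EuclideanSpace ℝ (Fin d)) 1)ᶜ = 0 := by
      rw [hν, Measure.sum_apply _ Metric.isClosed_closedBall.measurableSet.compl, ENNReal.tsum_eq_zero]
      intro k
      rw [Measure.smul_apply, Measure.restrict_apply Metric.isClosed_closedBall.measurableSet.compl]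
      have : (Metric.closedBall (0 : EuclideanSpace ℝ (Fin d)) 1)ᶜ ∩ E k = ∅ := by
        rw [← disjoint_iff_inter_eq_empty]
        exact (disjoint_compl_left_iff_subset.2 (hball k))
      simp [this]
    simp [this]
  · exact mul_pos (ENNReal.toReal_pos (ENNReal.inv_ne_zero.2 hWtop) (ENNReal.inv_ne_top.2 hW0)) two_pos
  · intro x r hr
    have : ν (Metric.ball x r) ≤ ENNReal.ofReal (2 * r ^ α) := by
      rw [← hgeo _ (by positivity), hν, Measure.sum_apply _ Metric.isOpen_ball.measurableSet]
      refine ENNReal.tsum_le_tsum fun k => ?_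
      rw [Measure.smul_apply, Measure.restrict_apply Metric.isOpen_ball.measurableSet, inter_comm,
        smul_eq_mul]
      calc _ ≤ w k * (volume (E k))⁻¹ * (ENNReal.ofReal (A k * r ^ α) * volume (E k)) := by
            gcongr; exact hbd k x r hr
        _ = w k * ENNReal.ofReal (A k * r ^ α) * ((volume (E k))⁻¹ * volume (E k)) := by ring
        _ = _ := by
          rw [hunit, mul_one, hw, ← ENNReal.ofReal_mul (by have := hApos k; positivity)]
          congr 1
          have := (hApos k).ne'
          field_simp
    rw [Measure.smul_apply, smul_eq_mul, mul_assoc, ENNReal.ofReal_mul ENNReal.toReal_nonneg,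
      ENNReal.ofReal_toReal (ENNReal.inv_ne_top.2 hW0)]
    gcongr
  · apply Measure.ae_smul_measure
    rw [hν, Measure.ae_sum_iff]
    intro i
    apply Measure.ae_smul_measure
    have h1 : ∫⁻ x in E i, ∑' k, (if k = i then 0 else ρ k x) ≠ ∞ := by
      rw [lintegral_tsum]
      · refine ne_top_of_le_ne_top ENNReal.ofReal_ne_top ((ENNReal.tsum_le_tsum ?_).trans (hgeo 1 zero_le_one).le)
        intro k
        by_cases hk : k = i
        · simp [hk]
        · simp only [hk, if_false, mul_one]
          exact hoff i k (Ne.symm hk)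
      · intro k
        by_cases hk : k = i
        · simp [hk]
        · simp only [hk, if_false]
          exact (hρ k).aemeasurable
    have h2 := ae_lt_top' (AEMeasurable.tsum ?_) h1
    · filter_upwards [h2] with x hx
      have : ∑' k, ρ k x ≤ ∑' k, ((if k = i then ρ i x else 0) + (if k = i then 0 else ρ k x)) := by
        refine ENNReal.tsum_le_tsum fun k => ?_
        by_cases hk : k = i <;> simp [hk]
      refine this.trans_lt ?_
      rw [ENNReal.tsum_add, tsum_ite_eq]
      exact ENNReal.add_lt_top.2 ⟨(hfin i x).lt_top, hx⟩
    · intro k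
      by_cases hk : k = i
      · simp [hk]
      · simp only [hk, if_false]
        exact (hρ k).aemeasurable
  · have : ∫⁻ x, ∑' k, ρ k x ∂ν = ∞ := by
      rw [hν, lintegral_sum_measure, eq_top_iff]
      calc (∞ : ℝ≥0∞) = ∑' k : ℕ, (1 : ℝ≥0∞) := by simp
        _ ≤ _ := by
          refine ENNReal.tsum_le_tsum fun k => ?_
          rw [lintegral_smul_measure, smul_eq_mul]
          calc (1 : ℝ≥0∞) = w k * (volume (E k))⁻¹ * (ENNReal.ofReal (2 ^ k * A k) * volume (E k)) := by
                rw [show w k * (volume (E k))⁻¹ * (ENNReal.ofReal (2 ^ k * A k) * volume (E k)) =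
                  (w k * ENNReal.ofReal (2 ^ k * A k)) * ((volume (E k))⁻¹ * volume (E k)) by ring,
                  hunit, hA', mul_one]
            _ ≤ _ := by
              gcongr
              rw [← setLIntegral_const]
              refine setLIntegral_mono_ae' (hE k) (Filter.Eventually.of_forall fun x hx => ?_)
              exact (hlow k x hx).trans (ENNReal.le_tsum k)
    rw [lintegral_smul_measure, this, smul_eq_mul, ENNReal.mul_top (ENNReal.inv_ne_zero.2 hWtop)]

section
open FourierTransform SchwartzMap

theorem plancherel_aux {d : ℕ} (f : EuclideanSpace ℝ (Fin d) → ℂ) (hf1 : Integrable f)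
    (hf2 : MemLp f 2) : MemLp (𝓕 f) 2 := by
  set F : Lp ℂ 2 (volume : Measure (EuclideanSpace ℝ (Fin d))) := hf2.toLp f with hF
  have key : ∀ᵐ x ∂(volume : Measure (EuclideanSpace ℝ (Fin d))), (𝓕 F : Lp ℂ 2 (volume : Measure (EuclideanSpace ℝ (Fin d)))) x = 𝓕 f x := by
    have hc : Continuous (𝓕 f) := by
      have := VectorFourier.fourierIntegral_continuous (μ := volume) (L := innerₗ (EuclideanSpace ℝ (Fin d)))
        (e := Real.fourierChar) Real.continuous_fourierChar continuous_inner hf1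
      exact this
    refine ae_eq_of_integral_contDiff_smul_eq
      ((Lp.memLp _).locallyIntegrable (by norm_num)) hc.locallyIntegrable ?_
    intro g hg hgc
    have hg' : ContDiff ℝ (↑(⊤ : ℕ∞)) (fun x => (g x : ℂ)) :=
      Complex.ofRealCLM.contDiff.comp hg
    have hgc' : HasCompactSupport (fun x => (g x : ℂ)) := hgc.comp_left (g := fun x : ℝ => (x : ℂ)) (by simp)
    set φ : 𝓢(EuclideanSpace ℝ (Fin d), ℂ) := hgc'.toSchwartzMap hg' with hφ
    have hφv : ∀ x, φ x = (g x : ℂ) := fun x => rfl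
    have e1 := congrArg (fun T => T φ) (Lp.fourier_toTemperedDistribution_eq F)
    simp only [TemperedDistribution.fourier_apply, Lp.toTemperedDistribution_apply] at e1
    have e2 : ∫ x, (𝓕 φ) x • F x = ∫ x, (𝓕 φ) x • f x := by
      apply integral_congr_ae
      filter_upwards [hf2.coeFn_toLp] with x hx
      rw [hF, hx]
    have e3 : ∫ x, (𝓕 (φ : EuclideanSpace ℝ (Fin d) → ℂ)) x • f x = ∫ x, φ x • 𝓕 f x := by
      have := VectorFourier.integral_fourierIntegral_smul_eq_flip (μ := volume) (ν := volume)
        (L := innerₗ (EuclideanSpace ℝ (Fin d)))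
        (e := Real.fourierChar) Real.continuous_fourierChar continuous_inner (φ.integrable) hf1
      rw [flip_innerₗ] at this
      exact this
    rw [SchwartzMap.fourier_coe] at e2 e1
    rw [e2, e3] at e1
    simp only [hφv] at e1
    simp only [Complex.real_smul]
    simpa using e1.symm
  exact (memLp_congr_ae key).1 (Lp.memLp _)
end

/-- reference frequency cube -/
def cubeQ (d : ℕ) (N : ℝ) : Set (EuclideanSpace ℝ (Fin d)) :=
  {ξ | ∀ i, ξ i ∈ Set.Ico (2 * Real.pi * N) (4 * Real.pi * N)}

/-- reference kernel -/
noncomputable def Dker (d : ℕ) (s : ℝ) (y : EuclideanSpace ℝ (Fin d)) : ℂ :=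
  ∫ ξ : EuclideanSpace ℝ (Fin d), Complex.exp (Complex.I * ((⟪y, ξ⟫ : ℝ) : ℂ)) *
    (cubeQ d 1).indicator (fun ξ => ((‖ξ‖ ^ (-s) : ℝ) : ℂ)) ξ

theorem cubeQ_preimage (d : ℕ) (N : ℝ) : WithLp.toLp 2 ⁻¹' (cubeQ d N) =
    Set.pi Set.univ (fun _ : Fin d => Set.Ico (2 * Real.pi * N) (4 * Real.pi * N)) := by
  ext x; simp [cubeQ]

theorem cubeQ_meas (d : ℕ) (N : ℝ) : MeasurableSet (cubeQ d N) := by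
  have : cubeQ d N = ⋂ i, (fun ξ : EuclideanSpace ℝ (Fin d) => ξ i) ⁻¹'
      Set.Ico (2 * Real.pi * N) (4 * Real.pi * N) := by ext x; simp [cubeQ]
  rw [this]
  exact MeasurableSet.iInter fun i => (by fun_prop : Measurable fun ξ : EuclideanSpace ℝ (Fin d) => ξ i) measurableSet_Ico

theorem cubeQ_vol (d : ℕ) (N : ℝ) : volume (cubeQ d N) = ENNReal.ofReal (2 * Real.pi * N) ^ d := by
  rw [← (PiLp.volume_preserving_toLp (Fin d)).measure_preimage (cubeQ_meas d N).nullMeasurableSet,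
    cubeQ_preimage, Real.volume_pi_Ico]
  simp only [Finset.prod_const, Finset.card_univ, Fintype.card_fin]
  congr 2
  ring

theorem cubeQ_norm_ge {d : ℕ} (hd : 1 ≤ d) {N : ℝ} {ξ : EuclideanSpace ℝ (Fin d)}
    (hξ : ξ ∈ cubeQ d N) : 2 * Real.pi * N ≤ ‖ξ‖ := by
  have h1 := (hξ ⟨0, hd⟩).1
  have h2 := PiLp.norm_apply_le ξ ⟨0, hd⟩
  exact h1.trans ((le_abs_self _).trans h2)

/-- the symbol -/
noncomputable def Wsym (d : ℕ) (s : ℝ) : EuclideanSpace ℝ (Fin d) → ℂ :=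
  (cubeQ d 1).indicator (fun ξ => ((‖ξ‖ ^ (-s) : ℝ) : ℂ))

theorem Wsym_memLp {d : ℕ} (hd : 1 ≤ d) {s : ℝ} (hs : 0 ≤ s) (p : ℝ≥0∞) :
    MemLp (Wsym d s) p := by
  unfold Wsym
  rw [memLp_indicator_iff_restrict (cubeQ_meas d 1)]
  have : IsFiniteMeasure (volume.restrict (cubeQ d 1)) := ⟨by
    rw [Measure.restrict_apply_univ, cubeQ_vol]; exact ENNReal.pow_lt_top ENNReal.ofReal_lt_top⟩
  refine MemLp.of_bound (C := 1) ?_ ?_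
  · have : Measurable fun ξ : EuclideanSpace ℝ (Fin d) => ((‖ξ‖ ^ (-s) : ℝ) : ℂ) := by fun_prop
    exact this.aestronglyMeasurable
  · refine (ae_restrict_iff' (cubeQ_meas d 1)).2 (Filter.Eventually.of_forall fun ξ hξ => ?_)
    have h := cubeQ_norm_ge hd hξ
    have : 1 ≤ ‖ξ‖ := by linarith [Real.pi_gt_three]
    rw [Complex.norm_real, Real.norm_of_nonneg (by positivity)]
    exact Real.rpow_le_one_of_one_le_of_nonpos this (by linarith)

theorem Dker_eq (d : ℕ) (s : ℝ) (w : EuclideanSpace ℝ (Fin d)) :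
    Dker d s ((-2 * Real.pi) • w) = FourierTransform.fourier (Wsym d s) w := by
  rw [Real.fourier_eq', Dker]
  congr 1; ext ξ
  rw [smul_eq_mul, inner_smul_left, real_inner_comm, Wsym]
  congr 2
  simp; ring

theorem Dker_eq' (d : ℕ) (s : ℝ) (y : EuclideanSpace ℝ (Fin d)) :
    Dker d s y = FourierTransform.fourier (Wsym d s) ((-2 * Real.pi)⁻¹ • y) := by
  rw [← Dker_eq, smul_smul, mul_inv_cancel₀ (by simp [Real.pi_ne_zero]), one_smul]

theorem Dker_cont {d : ℕ} (hd : 1 ≤ d) {s : ℝ} (hs : 0 ≤ s) : Continuous (Dker d s) := by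
  have hc : Continuous (FourierTransform.fourier (Wsym d s)) := by
    have := VectorFourier.fourierIntegral_continuous (μ := volume) (L := innerₗ (EuclideanSpace ℝ (Fin d)))
      (e := Real.fourierChar) Real.continuous_fourierChar continuous_inner
      (memLp_one_iff_integrable.1 (Wsym_memLp hd hs 1))
    exact this
  have : Dker d s = fun y => FourierTransform.fourier (Wsym d s) ((-2 * Real.pi)⁻¹ • y) := by
    ext y; exact Dker_eq' d s y
  rw [this]
  exact hc.comp (continuous_const_smul _)

theorem lintegral_comp_smul_aux {d : ℕ} (f : EuclideanSpace ℝ (Fin d) → ℝ≥0∞) (hf : Measurable f)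
    {R : ℝ} (hR : R ≠ 0) :
    ∫⁻ x, f (R • x) = ENNReal.ofReal (|(R ^ d)⁻¹|) * ∫⁻ x, f x := by
  have h := Measure.map_addHaar_smul (volume : Measure (EuclideanSpace ℝ (Fin d))) hR
  rw [← lintegral_map (g := fun x : EuclideanSpace ℝ (Fin d) => R • x) hf (measurable_const_smul R), h,
    lintegral_smul_measure]
  simp

theorem Dker_L2 {d : ℕ} (hd : 1 ≤ d) {s : ℝ} (hs : 0 ≤ s) :
    ∫⁻ y, ENNReal.ofReal (‖Dker d s y‖ ^ 2) ≠ ∞ := by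
  have h1 := plancherel_aux (Wsym d s) (memLp_one_iff_integrable.1 (Wsym_memLp hd hs 1)) (Wsym_memLp hd hs 2)
  have h2 := (lintegral_rpow_enorm_lt_top_of_eLpNorm_lt_top (by norm_num) (by norm_num) h1.2).ne
  have h3 := lintegral_comp_smul_aux (d := d) (fun y => ENNReal.ofReal (‖Dker d s y‖ ^ 2))
    (by have := (Dker_cont hd hs).measurable; fun_prop) (R := -2 * Real.pi) (by simp [Real.pi_ne_zero])
  simp only [Dker_eq] at h3
  intro htop
  rw [htop, ENNReal.mul_top (by simp [Real.pi_ne_zero])] at h3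
  apply h2
  rw [← h3]
  congr 1; ext x
  rw [← ofReal_norm, ENNReal.ofReal_rpow_of_nonneg (norm_nonneg _) (by norm_num)]
  norm_num

theorem Dker_tail {d : ℕ} (hd : 1 ≤ d) {s : ℝ} (hs : 0 ≤ s) :
    Filter.Tendsto (fun R : ℝ => ∫⁻ y in {y : EuclideanSpace ℝ (Fin d) | R ≤ |y ⟨0, hd⟩|},
      ENNReal.ofReal (‖Dker d s y‖ ^ 2)) Filter.atTop (nhds 0) := by
  set f := fun y => ENNReal.ofReal (‖Dker d s y‖ ^ 2) with hf
  have hm : ∀ R : ℝ, MeasurableSet {y : EuclideanSpace ℝ (Fin d) | R ≤ |y ⟨0, hd⟩|} := by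
    intro R
    exact measurableSet_le measurable_const (by fun_prop)
  have h := tendsto_measure_iInter_atTop (μ := volume.withDensity f)
    (s := fun R : ℝ => {y : EuclideanSpace ℝ (Fin d) | R ≤ |y ⟨0, hd⟩|})
    (fun R => (hm R).nullMeasurableSet) (fun a b hab y hy => le_trans hab hy)
    ⟨0, by
      rw [withDensity_apply _ (hm 0)]
      exact ne_top_of_le_ne_top (Dker_L2 hd hs) (setLIntegral_le_lintegral _ _)⟩
  have he : ⋂ R : ℝ, {y : EuclideanSpace ℝ (Fin d) | R ≤ |y ⟨0, hd⟩|} = ∅ := by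
    ext y
    simp only [mem_iInter, mem_ofPred_eq, mem_empty_iff_false, iff_false, not_forall, not_le]
    exact ⟨|y ⟨0, hd⟩| + 1, by linarith⟩
  rw [he, measure_empty] at h
  refine h.congr fun R => ?_
  exact withDensity_apply _ (hm R)

theorem Dker_tail_scaled {d : ℕ} (hd : 1 ≤ d) {s : ℝ} (hs : 0 ≤ s) {N : ℝ} (hN : 0 < N) (δ : ℝ)
    (p : EuclideanSpace ℝ (Fin d)) :
    ∫⁻ x in {x : EuclideanSpace ℝ (Fin d) | δ ≤ |x ⟨0, hd⟩ - p ⟨0, hd⟩|},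
      ENNReal.ofReal (‖Dker d s (N • (x - p))‖ ^ 2) =
    ENNReal.ofReal ((N ^ d)⁻¹) * ∫⁻ y in {y : EuclideanSpace ℝ (Fin d) | N * δ ≤ |y ⟨0, hd⟩|},
      ENNReal.ofReal (‖Dker d s y‖ ^ 2) := by
  have hm : ∀ R : ℝ, MeasurableSet {y : EuclideanSpace ℝ (Fin d) | R ≤ |y ⟨0, hd⟩|} := by
    intro R
    exact measurableSet_le measurable_const (by fun_prop)
  have hm' : MeasurableSet {x : EuclideanSpace ℝ (Fin d) | δ ≤ |x ⟨0, hd⟩ - p ⟨0, hd⟩|} :=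
    measurableSet_le measurable_const (by fun_prop)
  have hD := (Dker_cont hd hs).measurable
  rw [← lintegral_indicator hm', ← lintegral_indicator (hm _)]
  have h3 := lintegral_comp_smul_aux (d := d) ({y : EuclideanSpace ℝ (Fin d) | N * δ ≤ |y ⟨0, hd⟩|}.indicator
    fun y => ENNReal.ofReal (‖Dker d s y‖ ^ 2))
    ((by fun_prop : Measurable fun y => ENNReal.ofReal (‖Dker d s y‖ ^ 2)).indicator (hm _)) hN.ne'
  rw [abs_of_pos (by positivity)] at h3
  rw [← h3, ← lintegral_sub_right_eq_self (fun x => ({y : EuclideanSpace ℝ (Fin d) | N * δ ≤ |y ⟨0, hd⟩|}.indicator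
    fun y => ENNReal.ofReal (‖Dker d s y‖ ^ 2)) (N • x)) p]
  congr 1; ext x
  have : (N * δ ≤ |(N • (x - p)) ⟨0, hd⟩|) ↔ δ ≤ |x ⟨0, hd⟩ - p ⟨0, hd⟩| := by
    simp only [PiLp.smul_apply, PiLp.sub_apply, smul_eq_mul, abs_mul, abs_of_pos hN]
    exact mul_le_mul_iff_right₀ hN
  by_cases h : δ ≤ |x ⟨0, hd⟩ - p ⟨0, hd⟩|
  · rw [indicator_of_mem (by exact h), indicator_of_mem (by exact this.2 h)]
  · rw [indicator_of_notMem (by exact h), indicator_of_notMem (by exact fun h' => h (this.1 h'))]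

theorem Dker_lower {d : ℕ} (hd : 1 ≤ d) {s : ℝ} (hs : 0 ≤ s) :
    ∃ c c0 : ℝ, 0 < c ∧ c ≤ 1 ∧ 0 < c0 ∧ ∀ y : EuclideanSpace ℝ (Fin d),
      (∀ i, |y i| ≤ c) → c0 ≤ ‖Dker d s y‖ ^ 2 := by
  have h0 : Dker d s 0 ≠ 0 := by
    have : Dker d s 0 = ((∫ ξ in cubeQ d 1, ‖ξ‖ ^ (-s) : ℝ) : ℂ) := by
      rw [Dker, ← integral_indicator (cubeQ_meas d 1), ← integral_complex_ofReal]
      congr 1; ext ξ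
      simp only [inner_zero_left, Complex.ofReal_zero, mul_zero, Complex.exp_zero, one_mul]
      by_cases h : ξ ∈ cubeQ d 1 <;> simp [h]
    rw [this]
    have hIntOn : IntegrableOn (fun ξ : EuclideanSpace ℝ (Fin d) => ‖ξ‖ ^ (-s)) (cubeQ d 1) := by
      have := (memLp_one_iff_integrable.1 (Wsym_memLp hd hs 1))
      rw [Wsym, integrable_indicator_iff (cubeQ_meas d 1)] at this
      exact this.re
    have hpos : 0 < ∫ ξ in cubeQ d 1, ‖ξ‖ ^ (-s) := by
      rw [setIntegral_pos_iff_support_of_nonneg_ae (Filter.Eventually.of_forall fun ξ => by positivity) hIntOn]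
      have : Function.support (fun ξ : EuclideanSpace ℝ (Fin d) => ‖ξ‖ ^ (-s)) ∩ cubeQ d 1 = cubeQ d 1 := by
        apply inter_eq_right.2
        intro ξ hξ
        have h := cubeQ_norm_ge hd hξ
        have : 0 < ‖ξ‖ := by linarith [Real.pi_gt_three]
        exact (Real.rpow_pos_of_pos this _).ne'
      rw [this, cubeQ_vol]
      have := Real.pi_pos
      exact ENNReal.pow_pos (by simpa using this) _
    exact_mod_cast hpos.ne'
  have hc : Continuous fun v : Fin d → ℝ => ‖Dker d s (WithLp.toLp 2 v)‖ ^ 2 := by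
    have := Dker_cont hd hs
    fun_prop
  set b := ‖Dker d s 0‖ ^ 2 with hb
  have hbpos : 0 < b := by positivity
  have hev := hc.tendsto 0
  have hev2 := hev.eventually (lt_mem_nhds (show b / 2 < ‖Dker d s (WithLp.toLp 2 (0 : Fin d → ℝ))‖ ^ 2 by
    rw [WithLp.toLp_zero]; linarith))
  obtain ⟨ε, hε, hball⟩ := Metric.eventually_nhds_iff.1 hev2
  refine ⟨min (ε / 2) 1, b / 2, by positivity, min_le_right _ _, by positivity, fun y hy => ?_⟩
  have := hball (y := WithLp.ofLp y) (by
    rw [dist_zero_right]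
    refine lt_of_le_of_lt ((pi_norm_le_iff_of_nonneg (r := ε / 2) (by positivity)).2 fun i => ?_) (half_lt_self hε)
    exact (hy i).trans (min_le_left _ _))
  exact this.le

theorem ortho_1d {N v : ℝ} (hN : 0 < N) (hv : v ≠ 0) (hz : ∃ z : ℤ, N * v = z) :
    ∫ t : ℝ, (Set.Ico (2 * Real.pi * N) (4 * Real.pi * N)).indicator
      (fun t : ℝ => Complex.exp (-Complex.I * v * t)) t = 0 := by
  have hle : 2 * Real.pi * N ≤ 4 * Real.pi * N := by nlinarith [Real.pi_pos, mul_pos Real.pi_pos hN]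
  rw [integral_indicator measurableSet_Ico, integral_Ico_eq_integral_Ioc,
    ← intervalIntegral.integral_of_le hle, integral_exp_mul_complex (by simpa using hv)]
  obtain ⟨z, hz⟩ := hz
  have : Complex.exp (-Complex.I * v * (4 * Real.pi * N : ℝ)) =
      Complex.exp (-Complex.I * v * (2 * Real.pi * N : ℝ)) := by
    rw [Complex.exp_eq_exp_iff_exists_int]
    refine ⟨-z, ?_⟩
    have hz' : (N : ℂ) * v = z := by exact_mod_cast hz
    push_cast
    linear_combination (-2 * Real.pi * Complex.I : ℂ) * hz'
  rw [this, sub_self, zero_div]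

theorem ortho_exp {d : ℕ} {N : ℝ} (hN : 0 < N) (v : EuclideanSpace ℝ (Fin d)) (hv : v ≠ 0)
    (hz : ∀ i, ∃ z : ℤ, N * v i = z) :
    ∫ ξ : EuclideanSpace ℝ (Fin d), (cubeQ d N).indicator
      (fun ξ => Complex.exp (-Complex.I * ((⟪v, ξ⟫ : ℝ) : ℂ))) ξ = 0 := by
  rw [← (PiLp.volume_preserving_toLp (Fin d)).integral_comp
    (MeasurableEquiv.toLp 2 (Fin d → ℝ)).measurableEmbedding]
  have : ∀ x : Fin d → ℝ, (cubeQ d N).indicator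
      (fun ξ => Complex.exp (-Complex.I * ((⟪v, ξ⟫ : ℝ) : ℂ))) (WithLp.toLp 2 x) =
      ∏ i, (Set.Ico (2 * Real.pi * N) (4 * Real.pi * N)).indicator
        (fun t : ℝ => Complex.exp (-Complex.I * v i * t)) (x i) := by
    intro x
    by_cases hx : WithLp.toLp 2 x ∈ cubeQ d N
    · rw [indicator_of_mem hx]
      have hx' : ∀ i, x i ∈ Set.Ico (2 * Real.pi * N) (4 * Real.pi * N) := hx
      simp only [indicator_of_mem (hx' _)]
      rw [← Complex.exp_sum, PiLp.inner_apply]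
      congr 1
      push_cast
      rw [Finset.mul_sum]
      refine Finset.sum_congr rfl fun i _ => ?_
      simp
      ring
    · rw [indicator_of_notMem hx]
      have hx' : ¬ ∀ i, x i ∈ Set.Ico (2 * Real.pi * N) (4 * Real.pi * N) := hx
      push Not at hx'
      obtain ⟨i, hi⟩ := hx'
      symm
      exact Finset.prod_eq_zero (Finset.mem_univ i) (indicator_of_notMem hi _)
  simp only [this]
  rw [integral_fintype_prod_volume_eq_prod (fun i (t : ℝ) =>
    (Set.Ico (2 * Real.pi * N) (4 * Real.pi * N)).indicator
        (fun t : ℝ => Complex.exp (-Complex.I * v i * t)) t)]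
  have : ∃ i, v i ≠ 0 := by
    by_contra h
    push Not at h
    exact hv (by ext i; simpa using h i)
  obtain ⟨i, hi⟩ := this
  exact Finset.prod_eq_zero (Finset.mem_univ i) (ortho_1d hN hi (hz i))

/-- the data on the Fourier side -/
noncomputable def gfun (d : ℕ) (m s N : ℝ) (p : EuclideanSpace ℝ (Fin d)) :
    EuclideanSpace ℝ (Fin d) → ℂ :=
  (cubeQ d N).indicator (fun ξ => (((Real.sqrt ((2 * Real.pi * N) ^ d))⁻¹ * ‖ξ‖ ^ (-s) : ℝ) : ℂ) *
    Complex.exp (-Complex.I * ((⟪p, ξ⟫ + (1 / 2) * ‖ξ‖ ^ m : ℝ) : ℂ)))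

theorem gfun_prod {d : ℕ} (hd : 1 ≤ d) (m s : ℝ) {N : ℝ} (hN : 0 < N)
    (p p' ξ : EuclideanSpace ℝ (Fin d)) :
    ((‖ξ‖ ^ (2 * s) : ℝ) : ℂ) * (gfun d m s N p ξ * (starRingEnd ℂ) (gfun d m s N p' ξ)) =
    ((((2 * Real.pi * N) ^ d)⁻¹ : ℝ) : ℂ) * (cubeQ d N).indicator
      (fun ξ => Complex.exp (-Complex.I * ((⟪p - p', ξ⟫ : ℝ) : ℂ))) ξ := by
  by_cases hξ : ξ ∈ cubeQ d N
  · have h := cubeQ_norm_ge hd hξ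
    have hpi := Real.pi_pos
    have hpos : 0 < ‖ξ‖ := lt_of_lt_of_le (by positivity) h
    simp only [gfun, indicator_of_mem hξ, map_mul, Complex.conj_ofReal]
    rw [← Complex.exp_conj, map_mul, map_neg, Complex.conj_I, Complex.conj_ofReal, neg_neg]
    have e1 : Complex.exp (-Complex.I * ((⟪p, ξ⟫ + (1 / 2) * ‖ξ‖ ^ m : ℝ) : ℂ)) *
        Complex.exp (Complex.I * ((⟪p', ξ⟫ + (1 / 2) * ‖ξ‖ ^ m : ℝ) : ℂ)) =
        Complex.exp (-Complex.I * ((⟪p - p', ξ⟫ : ℝ) : ℂ)) := by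
      rw [← Complex.exp_add, inner_sub_left]
      congr 1
      push_cast
      ring
    rw [← e1]
    have e2 : ‖ξ‖ ^ (2 * s) * (((Real.sqrt ((2 * Real.pi * N) ^ d))⁻¹ * ‖ξ‖ ^ (-s)) *
        ((Real.sqrt ((2 * Real.pi * N) ^ d))⁻¹ * ‖ξ‖ ^ (-s))) = ((2 * Real.pi * N) ^ d)⁻¹ := by
      have h1 : ‖ξ‖ ^ (2 * s) * (‖ξ‖ ^ (-s) * ‖ξ‖ ^ (-s)) = 1 := by
        rw [← Real.rpow_add hpos, ← Real.rpow_add hpos]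
        ring_nf
        simp
      have h2 : Real.sqrt ((2 * Real.pi * N) ^ d) * Real.sqrt ((2 * Real.pi * N) ^ d) =
        (2 * Real.pi * N) ^ d := Real.mul_self_sqrt (by positivity)
      calc _ = (‖ξ‖ ^ (2 * s) * (‖ξ‖ ^ (-s) * ‖ξ‖ ^ (-s))) *
            (Real.sqrt ((2 * Real.pi * N) ^ d) * Real.sqrt ((2 * Real.pi * N) ^ d))⁻¹ := by
              rw [mul_inv]; ring
        _ = _ := by rw [h1, h2, one_mul]
    rw [← e2]
    push_cast
    ring
  · simp [gfun, indicator_of_notMem hξ]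

theorem gfun_ortho_same {d : ℕ} (hd : 1 ≤ d) (m s : ℝ) {N : ℝ} (hN : 0 < N)
    (p p' : EuclideanSpace ℝ (Fin d)) (hne : p ≠ p') (hz : ∀ i, ∃ z : ℤ, N * (p i - p' i) = z) :
    ∫ ξ, ((‖ξ‖ ^ (2 * s) : ℝ) : ℂ) * (gfun d m s N p ξ * (starRingEnd ℂ) (gfun d m s N p' ξ)) = 0 := by
  simp only [gfun_prod hd m s hN]
  rw [integral_const_mul, ortho_exp hN (p - p') (sub_ne_zero.2 hne) hz, mul_zero]

theorem gfun_norm {d : ℕ} (hd : 1 ≤ d) (m s : ℝ) {N : ℝ} (hN : 0 < N)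
    (p : EuclideanSpace ℝ (Fin d)) :
    ∫ ξ, ((‖ξ‖ ^ (2 * s) : ℝ) : ℂ) * (gfun d m s N p ξ * (starRingEnd ℂ) (gfun d m s N p ξ)) = 1 := by
  simp only [gfun_prod hd m s hN]
  rw [integral_const_mul]
  have hpi := Real.pi_pos
  simp only [sub_self, inner_zero_left, Complex.ofReal_zero, mul_zero, Complex.exp_zero]
  rw [integral_indicator (cubeQ_meas d N), setIntegral_const, measureReal_def, cubeQ_vol,
    ENNReal.toReal_pow, ENNReal.toReal_ofReal (by positivity)]
  rw [Complex.real_smul, mul_one, ← Complex.ofReal_mul, inv_mul_cancel₀ (by positivity)]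
  simp

theorem gfun_ortho_diff {d : ℕ} (hd : 1 ≤ d) (m s : ℝ) {N N' : ℝ} (h : 2 * N ≤ N' ∨ 2 * N' ≤ N)
    (p p' : EuclideanSpace ℝ (Fin d)) :
    ∫ ξ, ((‖ξ‖ ^ (2 * s) : ℝ) : ℂ) * (gfun d m s N p ξ * (starRingEnd ℂ) (gfun d m s N' p' ξ)) = 0 := by
  rw [← integral_zero (EuclideanSpace ℝ (Fin d)) ℂ]
  congr 1; ext ξ
  by_cases h1 : ξ ∈ cubeQ d N
  · by_cases h2 : ξ ∈ cubeQ d N'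
    · exfalso
      have a := h1 ⟨0, hd⟩
      have b := h2 ⟨0, hd⟩
      have hpi := Real.pi_pos
      rcases h with h | h
      · have := a.2.trans_le ((by nlinarith : 4 * Real.pi * N ≤ 2 * Real.pi * N').trans b.1)
        exact lt_irrefl _ this
      · have := b.2.trans_le ((by nlinarith : 4 * Real.pi * N' ≤ 2 * Real.pi * N).trans a.1)
        exact lt_irrefl _ this
    · simp [gfun, indicator_of_notMem h2]
  · simp [gfun, indicator_of_notMem h1]

theorem fracEvol_gfun {d : ℕ} (m s : ℝ) {N : ℝ} (hN : 0 < N)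
    (p x : EuclideanSpace ℝ (Fin d)) :
    ‖fracEvol d m (gfun d m s N p) (1 / 2) x‖ ^ 2 =
      ((2 * Real.pi) ^ d)⁻¹ * N ^ ((d : ℝ) - 2 * s) * ‖Dker d s (N • (x - p))‖ ^ 2 := by
  set κ := (Real.sqrt ((2 * Real.pi * N) ^ d))⁻¹ with hκ
  set f : EuclideanSpace ℝ (Fin d) → ℂ := fun ξ => Complex.exp (Complex.I * ((⟪x - p, ξ⟫ : ℝ) : ℂ)) *
    (cubeQ d N).indicator (fun ξ => ((‖ξ‖ ^ (-s) : ℝ) : ℂ)) ξ with hf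
  have e1 : fracEvol d m (gfun d m s N p) (1 / 2) x = (κ : ℂ) * ∫ ξ, f ξ := by
    rw [fracEvol, ← integral_const_mul]
    congr 1; ext ξ
    by_cases hξ : ξ ∈ cubeQ d N
    · simp only [gfun, hf, indicator_of_mem hξ]
      have : Complex.exp (Complex.I * ((⟪x - p, ξ⟫ : ℝ) : ℂ)) =
        Complex.exp (Complex.I * ((⟪x, ξ⟫ + (1 / 2) * ‖ξ‖ ^ m : ℝ) : ℂ)) *
        Complex.exp (-Complex.I * ((⟪p, ξ⟫ + (1 / 2) * ‖ξ‖ ^ m : ℝ) : ℂ)) := by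
        rw [← Complex.exp_add, inner_sub_left]
        congr 1
        push_cast
        ring
      rw [this, Complex.ofReal_mul, ← hκ]
      ring
    · simp [gfun, hf, indicator_of_notMem hξ]
  have e2 : ∀ ξ, f (N • ξ) = ((N ^ (-s) : ℝ) : ℂ) * (Complex.exp (Complex.I * ((⟪N • (x - p), ξ⟫ : ℝ) : ℂ)) *
    (cubeQ d 1).indicator (fun ξ => ((‖ξ‖ ^ (-s) : ℝ) : ℂ)) ξ) := by
    intro ξ
    have hiff : N • ξ ∈ cubeQ d N ↔ ξ ∈ cubeQ d 1 := by
      simp only [cubeQ, mem_ofPred_eq, PiLp.smul_apply, smul_eq_mul, mem_Ico, mul_one]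
      refine forall_congr' fun i => and_congr ?_ ?_
      · rw [mul_comm, mul_le_mul_iff_right₀ hN]
      · rw [mul_comm (4 * Real.pi), mul_lt_mul_iff_right₀ hN]
    simp only [hf, inner_smul_left, inner_smul_right]
    by_cases hξ : ξ ∈ cubeQ d 1
    · rw [indicator_of_mem hξ, indicator_of_mem (hiff.2 hξ), norm_smul, Real.norm_of_nonneg hN.le,
        Real.mul_rpow hN.le (norm_nonneg _)]
      simp
      ring
    · rw [indicator_of_notMem hξ, indicator_of_notMem (fun h => hξ (hiff.1 h))]
      simp
  have e3 := Measure.integral_comp_smul (volume : Measure (EuclideanSpace ℝ (Fin d))) f N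
  simp only [e2] at e3
  rw [integral_const_mul, finrank_euclideanSpace, Fintype.card_fin, abs_of_pos (by positivity)] at e3
  have e4 : ∫ ξ, f ξ = ((N ^ d * N ^ (-s) : ℝ) : ℂ) * Dker d s (N • (x - p)) := by
    have e5 : ((N ^ (-s) : ℝ) : ℂ) * Dker d s (N • (x - p)) = (((N ^ d)⁻¹ : ℝ) : ℂ) * ∫ ξ, f ξ := by
      rw [Complex.real_smul] at e3; exact e3
    rw [Complex.ofReal_mul, mul_assoc, e5, ← mul_assoc, ← Complex.ofReal_mul,
      mul_inv_cancel₀ (by positivity)]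
    simp
  have hpi := Real.pi_pos
  rw [e1, e4, norm_mul, norm_mul, Complex.norm_real, Complex.norm_real, mul_pow, mul_pow, ← mul_assoc]
  congr 1
  rw [Real.norm_eq_abs, Real.norm_eq_abs, sq_abs, sq_abs, hκ, inv_pow, Real.sq_sqrt (by positivity), mul_pow, mul_pow,
    mul_inv, mul_assoc]
  congr 1
  have h1 : N ^ ((d : ℝ) - 2 * s) = N ^ d * (N ^ (-s)) ^ 2 := by
    rw [← Real.rpow_natCast (N ^ (-s)) 2, ← Real.rpow_mul hN.le, ← Real.rpow_natCast N d, ← Real.rpow_add hN]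
    congr 1
    push_cast
    ring
  rw [h1]
  have : N ^ d ≠ 0 := by positivity
  field_simp

/-- one-dimensional union of short intervals -/
def Sset (n' : ℕ) (n N c : ℝ) : Set ℝ :=
  ⋃ j : Fin n', Set.Ico (((n' : ℝ) + (j : ℕ)) / n) (((n' : ℝ) + (j : ℕ)) / n + c / N)

theorem Sset_meas (n' : ℕ) (n N c : ℝ) : MeasurableSet (Sset n' n N c) :=
  MeasurableSet.iUnion fun _ => measurableSet_Ico

theorem Sset_vol (n' : ℕ) {n N c : ℝ} (hn : 0 < n) (hnN : n ≤ N) (hc1 : c ≤ 1) :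
    volume (Sset n' n N c) = ENNReal.ofReal (n' * (c / N)) := by
  have hN : 0 < N := hn.trans_le hnN
  have hcN : c / N ≤ 1 / n := by gcongr
  have key : ∀ i j : Fin n', i < j → ((n' : ℝ) + (i : ℕ)) / n + c / N ≤ ((n' : ℝ) + (j : ℕ)) / n := by
    intro i j hij
    have : ((i : ℕ) : ℝ) + 1 ≤ (j : ℕ) := by exact_mod_cast hij
    calc _ ≤ ((n' : ℝ) + (i : ℕ)) / n + 1 / n := by gcongr
      _ = ((n' : ℝ) + ((i : ℕ) + 1)) / n := by ring
      _ ≤ _ := by gcongr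
  rw [Sset, measure_iUnion]
  · simp only [Real.volume_Ico, add_sub_cancel_left, tsum_fintype, Finset.sum_const,
      Finset.card_univ, Fintype.card_fin]
    rw [nsmul_eq_mul, ENNReal.ofReal_mul (by positivity), ENNReal.ofReal_natCast]
  · intro i j hij
    rcases lt_or_gt_of_ne hij with h | h
    · exact Set.disjoint_left.2 fun x hx hy => absurd (hx.2.trans_le (key i j h)) (not_lt.2 hy.1)
    · exact Set.disjoint_left.2 fun x hx hy => absurd (hy.2.trans_le (key j i h)) (not_lt.2 hx.1)
  · intro _; exact measurableSet_Ico

theorem count_aux (n' : ℕ) (x y : ℝ) (hxy : x ≤ y) (J : Finset (Fin n'))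
    (hJ : ∀ j ∈ J, x ≤ ((j : ℕ) : ℝ) ∧ ((j : ℕ) : ℝ) ≤ y) : (J.card : ℝ) ≤ y - x + 1 := by
  have h1 : J.card ≤ (Finset.Icc ⌈x⌉ ⌊y⌋).card := by
    refine Finset.card_le_card_of_injOn (fun j : Fin n' => ((j : ℕ) : ℤ)) ?_ ?_
    · intro j hj
      have := hJ j hj
      simp only [Finset.coe_Icc, Set.mem_Icc]
      exact ⟨Int.ceil_le.2 (by exact_mod_cast this.1), Int.le_floor.2 (by exact_mod_cast this.2)⟩
    · intro i _ j _ hij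
      simp only [Nat.cast_inj] at hij
      exact Fin.ext hij
  rw [Int.card_Icc] at h1
  have h2 : (J.card : ℝ) ≤ ((⌊y⌋ + 1 - ⌈x⌉).toNat : ℝ) := by exact_mod_cast h1
  refine h2.trans ?_
  rcases le_total 0 (⌊y⌋ + 1 - ⌈x⌉) with h | h
  · have h3 : ((⌊y⌋ + 1 - ⌈x⌉).toNat : ℝ) = ((⌊y⌋ + 1 - ⌈x⌉ : ℤ) : ℝ) := by
      exact_mod_cast congrArg (fun z : ℤ => (z : ℝ)) (Int.toNat_of_nonneg h)
    rw [h3]; push_cast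
    linarith [Int.floor_le y, Int.le_ceil x]
  · rw [Int.toNat_of_nonpos h]; simp; linarith

theorem Sset_bound (n' : ℕ) (hn' : 1 ≤ n') {P n N c θ : ℝ} (hP : 1 ≤ P) (hn : n = n' * P)
    (hnN : n ≤ N) (hc : 0 < c) (hc1 : c ≤ 1) (hθ : 0 < θ) (hθ1 : θ ≤ 1) (hNθ : N ^ θ ≤ 2 * n)
    (a r : ℝ) (hr : 0 < r) :
    volume (Sset n' n N c ∩ Set.Icc (a - r) (a + r)) ≤
      ENNReal.ofReal (10 * P / c * r ^ θ) * volume (Sset n' n N c) := by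
  have hn'0 : (0 : ℝ) < n' := by exact_mod_cast hn'
  have hn0 : 0 < n := by rw [hn]; positivity
  have hN : 0 < N := hn0.trans_le hnN
  have hPc : 1 ≤ 10 * P / c := by
    rw [le_div_iff₀ hc]; linarith
  rcases le_or_gt 1 r with h1 | h1
  · calc _ ≤ volume (Sset n' n N c) := measure_mono inter_subset_left
      _ = 1 * volume (Sset n' n N c) := (one_mul _).symm
      _ ≤ _ := by
        gcongr
        rw [← ENNReal.ofReal_one]
        apply ENNReal.ofReal_le_ofReal
        have := Real.one_le_rpow h1 hθ.le
        nlinarith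
  classical
  set J : Finset (Fin n') := Finset.univ.filter fun j : Fin n' =>
    (Set.Ico (((n' : ℝ) + (j : ℕ)) / n) (((n' : ℝ) + (j : ℕ)) / n + c / N) ∩
      Set.Icc (a - r) (a + r)).Nonempty with hJ
  have hcard : (J.card : ℝ) ≤ 2 * r * n + 2 := by
    have := count_aux n' (n * (a - r) - n' - 1) (n * (a + r) - n') (by nlinarith) J (by
      intro j hj
      obtain ⟨x, hx1, hx2⟩ := (Finset.mem_filter.1 hj).2
      have hcN : c / N ≤ 1 / n := by gcongr
      have e1 : ((n' : ℝ) + (j : ℕ)) / n ≤ a + r := hx1.1.trans hx2.2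
      have e2 : a - r ≤ ((n' : ℝ) + (j : ℕ)) / n + 1 / n := by linarith [hx1.2, hx2.1]
      rw [div_le_iff₀ hn0] at e1
      rw [← add_div, le_div_iff₀ hn0] at e2
      constructor <;> linarith)
    linarith
  have hmin : 0 ≤ min (c / N) (2 * r) := by positivity
  have hle : volume (Sset n' n N c ∩ Set.Icc (a - r) (a + r)) ≤
      ENNReal.ofReal (J.card * min (c / N) (2 * r)) := by
    rw [Sset, iUnion_inter]
    refine (measure_iUnion_le _).trans ?_
    rw [tsum_fintype]
    have : ∀ j : Fin n', volume (Set.Ico (((n' : ℝ) + (j : ℕ)) / n) (((n' : ℝ) + (j : ℕ)) / n + c / N) ∩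
      Set.Icc (a - r) (a + r)) ≤ if j ∈ J then ENNReal.ofReal (min (c / N) (2 * r)) else 0 := by
      intro j
      by_cases hj : j ∈ J
      · rw [if_pos hj, ENNReal.ofReal_min]
        refine le_min ((measure_mono inter_subset_left).trans ?_) ((measure_mono inter_subset_right).trans ?_)
        · rw [Real.volume_Ico, add_sub_cancel_left]
        · rw [Real.volume_Icc]; apply ENNReal.ofReal_le_ofReal; linarith
      · have : ¬ (Set.Ico (((n' : ℝ) + (j : ℕ)) / n) (((n' : ℝ) + (j : ℕ)) / n + c / N) ∩
          Set.Icc (a - r) (a + r)).Nonempty := fun h => hj (Finset.mem_filter.2 ⟨Finset.mem_univ _, h⟩)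
        rw [not_nonempty_iff_eq_empty.1 this]; simp
    refine (Finset.sum_le_sum fun j _ => this j).trans ?_
    rw [Finset.sum_ite_mem, Finset.univ_inter, Finset.sum_const, nsmul_eq_mul,
      ENNReal.ofReal_mul (by positivity), ENNReal.ofReal_natCast]
  refine hle.trans ?_
  rw [Sset_vol n' hn0 hnN hc1, ← ENNReal.ofReal_mul (by positivity)]
  apply ENNReal.ofReal_le_ofReal
  set t := min 1 (2 * r * N / c) with ht
  have ht0 : 0 ≤ t := by positivity
  have e0 : min (c / N) (2 * r) = c / N * t := by
    rw [ht, mul_min_of_nonneg _ _ (by positivity)]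
    congr 1
    · ring
    · field_simp
  have e1 : t ≤ 1 := min_le_left _ _
  have e2 : t ≤ (2 * r * N / c) ^ θ := by
    calc t ≤ t ^ θ := by
          rcases eq_or_lt_of_le ht0 with h | h
          · rw [← h]; positivity
          · calc t = t ^ (1 : ℝ) := (Real.rpow_one t).symm
              _ ≤ t ^ θ := Real.rpow_le_rpow_of_exponent_ge h e1 hθ1
      _ ≤ _ := Real.rpow_le_rpow ht0 (min_le_right _ _) hθ.le
  have e3 : (2 * r * N / c) ^ θ ≤ 2 / c * r ^ θ * (2 * n) := by
    have : 2 * r * N / c = 2 / c * r * N := by ring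
    rw [this, Real.mul_rpow (by positivity) hN.le, Real.mul_rpow (by positivity) hr.le]
    gcongr
    calc (2 / c) ^ θ ≤ (2 / c) ^ (1 : ℝ) := by
          apply Real.rpow_le_rpow_of_exponent_le _ hθ1
          rw [le_div_iff₀ hc]; linarith
      _ = _ := Real.rpow_one _
  have e4 : r ≤ r ^ θ := by
    calc r = r ^ (1 : ℝ) := (Real.rpow_one r).symm
      _ ≤ r ^ θ := Real.rpow_le_rpow_of_exponent_ge hr h1.le hθ1
  have hrθ : 0 < r ^ θ := by positivity
  have e5 : (2 * r * n + 2) * t ≤ 10 * P / c * r ^ θ * n' := by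
    have f1 : 2 * r * n * t ≤ 2 / c * r ^ θ * n := by
      calc 2 * r * n * t ≤ 2 * r ^ θ * n * 1 := by gcongr
        _ ≤ 2 * r ^ θ * n * (1 / c) := by
          gcongr; rw [le_div_iff₀ hc]; linarith
        _ = _ := by ring
    have f2 : 2 * t ≤ 8 / c * r ^ θ * n := by
      calc 2 * t ≤ 2 * (2 / c * r ^ θ * (2 * n)) := by gcongr; exact e2.trans e3
        _ = _ := by ring
    calc _ = 2 * r * n * t + 2 * t := by ring
      _ ≤ 2 / c * r ^ θ * n + 8 / c * r ^ θ * n := add_le_add f1 f2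
      _ = _ := by rw [hn]; ring
  calc (J.card : ℝ) * min (c / N) (2 * r) ≤ (2 * r * n + 2) * (c / N * t) := by rw [e0]; gcongr
    _ = ((2 * r * n + 2) * t) * (c / N) := by ring
    _ ≤ (10 * P / c * r ^ θ * n') * (c / N) := by gcongr
    _ = _ := by ring

/-- d-dimensional set -/
def Eset (d : ℕ) (S : Set ℝ) : Set (EuclideanSpace ℝ (Fin d)) := {x | ∀ i, x i ∈ S}

theorem Eset_preimage (d : ℕ) (S : Set ℝ) : WithLp.toLp 2 ⁻¹' (Eset d S) =
    Set.pi Set.univ (fun _ : Fin d => S) := by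
  ext x; simp [Eset]

theorem Eset_meas (d : ℕ) {S : Set ℝ} (hS : MeasurableSet S) : MeasurableSet (Eset d S) := by
  have : Eset d S = ⋂ i, (fun ξ : EuclideanSpace ℝ (Fin d) => ξ i) ⁻¹' S := by ext x; simp [Eset]
  rw [this]
  exact MeasurableSet.iInter fun i => (by fun_prop : Measurable fun ξ : EuclideanSpace ℝ (Fin d) => ξ i) hS

theorem Eset_vol (d : ℕ) {S : Set ℝ} (hS : MeasurableSet S) : volume (Eset d S) = volume S ^ d := by
  rw [← (PiLp.volume_preserving_toLp (Fin d)).measure_preimage (Eset_meas d hS).nullMeasurableSet,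
    Eset_preimage, volume_pi_pi]
  simp

theorem Eset_bound (d : ℕ) {S : Set ℝ} (hS : MeasurableSet S) {B θ : ℝ} (hB : 0 ≤ B)
    (h : ∀ a r : ℝ, 0 < r → volume (S ∩ Set.Icc (a - r) (a + r)) ≤ ENNReal.ofReal (B * r ^ θ) * volume S)
    (x : EuclideanSpace ℝ (Fin d)) (r : ℝ) (hr : 0 < r) :
    volume (Eset d S ∩ Metric.ball x r) ≤ ENNReal.ofReal (B ^ d * r ^ (d * θ)) * volume (Eset d S) := by
  rw [Eset_vol d hS, ← (PiLp.volume_preserving_toLp (Fin d)).measure_preimage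
    ((Eset_meas d hS).inter Metric.isOpen_ball.measurableSet).nullMeasurableSet]
  have hsub : WithLp.toLp 2 ⁻¹' (Eset d S ∩ Metric.ball x r) ⊆
      Set.pi Set.univ (fun i : Fin d => S ∩ Set.Icc (x i - r) (x i + r)) := by
    intro y hy i _
    refine ⟨hy.1 i, ?_⟩
    have h1 : dist (WithLp.toLp 2 y) x < r := hy.2
    rw [dist_eq_norm] at h1
    have h2 := PiLp.norm_apply_le (WithLp.toLp 2 y - x) i
    simp only [PiLp.sub_apply, Real.norm_eq_abs] at h2
    have h3 := abs_le.1 (h2.trans h1.le)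
    constructor <;> linarith [h3.1, h3.2]
  refine (measure_mono hsub).trans ?_
  rw [volume_pi_pi]
  calc _ ≤ ∏ _i : Fin d, ENNReal.ofReal (B * r ^ θ) * volume S :=
        Finset.prod_le_prod' fun i _ => h _ r hr
    _ = _ := by
      simp only [Finset.prod_const, Finset.card_univ, Fintype.card_fin]
      rw [mul_pow, ← ENNReal.ofReal_pow (by positivity), mul_pow, mul_comm (d : ℝ), Real.rpow_mul hr.le,
        Real.rpow_natCast]

/-- frequency scale -/
noncomputable def Nfun (θ : ℝ) (n : ℕ) : ℕ := n * ⌈(n : ℝ) ^ (1 / θ - 1)⌉₊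

theorem Nfun_props {θ : ℝ} (hθ : 0 < θ) (hθ1 : θ ≤ 1) {n : ℕ} (hn : 1 ≤ n) :
    n ≤ Nfun θ n ∧ (n : ℝ) ≤ (Nfun θ n : ℝ) ^ θ ∧ (Nfun θ n : ℝ) ^ θ ≤ 2 * n := by
  have hn1 : (1 : ℝ) ≤ n := by exact_mod_cast hn
  have hn0 : (0 : ℝ) < n := by linarith
  have hexp : 0 ≤ 1 / θ - 1 := by
    rw [sub_nonneg, le_div_iff₀ hθ]; linarith
  have hz := Real.one_le_rpow hn1 hexp
  set z := (n : ℝ) ^ (1 / θ - 1) with hzdef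
  have hq1 : z ≤ (⌈z⌉₊ : ℝ) := Nat.le_ceil z
  have hq2 : (⌈z⌉₊ : ℝ) ≤ 2 * z := by
    have := Nat.ceil_lt_add_one (by linarith : 0 ≤ z)
    linarith
  have hnz : n * z = (n : ℝ) ^ (1 / θ) := by
    rw [hzdef]
    nth_rewrite 1 [← Real.rpow_one (n : ℝ)]
    rw [← Real.rpow_add hn0]; congr 1; ring
  have hpow : ((n : ℝ) ^ (1 / θ)) ^ θ = n := by
    rw [← Real.rpow_mul hn0.le, one_div, inv_mul_cancel₀ hθ.ne', Real.rpow_one]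
  have hcast : (Nfun θ n : ℝ) = n * (⌈z⌉₊ : ℝ) := by rw [Nfun]; push_cast; rfl
  refine ⟨?_, ?_, ?_⟩
  · have : 1 ≤ ⌈z⌉₊ := Nat.one_le_ceil_iff.2 (by linarith)
    exact Nat.le_mul_of_pos_right n this
  · refine hpow.symm.le.trans ?_
    rw [hcast]
    apply Real.rpow_le_rpow (by positivity) _ hθ.le
    rw [← hnz]; gcongr
  · rw [hcast]
    calc _ ≤ (2 * (n : ℝ) ^ (1 / θ)) ^ θ := by
          apply Real.rpow_le_rpow (by positivity) _ hθ.le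
          rw [← hnz]; nlinarith
      _ = 2 ^ θ * n := by rw [Real.mul_rpow (by norm_num) (by positivity), hpow]
      _ ≤ 2 ^ (1 : ℝ) * n := by
          gcongr
          · norm_num
      _ = _ := by rw [Real.rpow_one]

theorem Nfun_double {θ : ℝ} (hθ : 0 < θ) (hθ1 : θ ≤ 1) {n k : ℕ} (h : 2 * n ≤ k) :
    2 * Nfun θ n ≤ Nfun θ k := by
  have hexp : 0 ≤ 1 / θ - 1 := by
    rw [sub_nonneg, le_div_iff₀ hθ]; linarith
  unfold Nfun
  rw [← mul_assoc]
  apply Nat.mul_le_mul h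
  apply Nat.ceil_le_ceil
  apply Real.rpow_le_rpow (by positivity) _ hexp
  exact_mod_cast (by omega : n ≤ k)

theorem good_eventually {d : ℕ} (hd : 1 ≤ d) {α s β : ℝ} (hs0 : 0 ≤ s)
    (hβ : 1 ≤ β) (hnec : α / β < d - 2 * s) (M C δ ε : ℝ) (hM : 0 < M) (hC : 0 < C) (hδ : 0 < δ) (hε : 0 < ε) :
    ∀ᶠ N : ℝ in Filter.atTop,
      ENNReal.ofReal M * (∫⁻ y in {y : EuclideanSpace ℝ (Fin d) | N * δ ≤ |y ⟨0, hd⟩|},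
        ENNReal.ofReal (‖Dker d s y‖ ^ 2)) ≤ ENNReal.ofReal ε ∧
      N ^ α * (M * C * N ^ (-((d : ℝ) - 2 * s))) ^ β ≤ ε := by
  apply Filter.Eventually.and
  · have h1 : Filter.Tendsto (fun N : ℝ => N * δ) Filter.atTop Filter.atTop :=
      Filter.tendsto_id.atTop_mul_const hδ
    have h2 := ENNReal.Tendsto.const_mul (a := ENNReal.ofReal M) ((Dker_tail hd hs0).comp h1)
      (Or.inr ENNReal.ofReal_ne_top)
    rw [mul_zero] at h2
    have h3 := h2.eventually (gt_mem_nhds (show (0 : ℝ≥0∞) < ENNReal.ofReal ε by simpa using hε))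
    filter_upwards [h3] with N hN
    exact hN.le
  · have hβ0 : 0 < β := by linarith
    have hneg : 0 < β * (d - 2 * s) - α := by
      rw [div_lt_iff₀ hβ0] at hnec; linarith
    have h1 := (tendsto_rpow_neg_atTop hneg).const_mul ((M * C) ^ β)
    rw [mul_zero] at h1
    have h2 := h1.eventually (gt_mem_nhds hε)
    filter_upwards [h2, Filter.eventually_gt_atTop 0] with N hN hN0
    refine le_trans (le_of_eq ?_) hN.le
    rw [Real.mul_rpow (by positivity) (by positivity), ← Real.rpow_mul hN0.le]
    rw [mul_left_comm, ← Real.rpow_add hN0]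
    congr 2
    ring

theorem Sset_range {n' : ℕ} (hn' : 1 ≤ n') {P n N c : ℝ} (hP : 0 < P) (hn : n = n' * P)
    (hnN : n ≤ N) (hc1 : c ≤ 1) {x : ℝ} (hx : x ∈ Sset n' n N c) : 1 / P ≤ x ∧ x ≤ 2 / P := by
  have hn'0 : (0 : ℝ) < n' := by exact_mod_cast hn'
  have hn0 : 0 < n := by rw [hn]; positivity
  have hN : 0 < N := hn0.trans_le hnN
  have hcN : c / N ≤ 1 / n := by gcongr
  obtain ⟨j, hj⟩ := mem_iUnion.1 hx
  have hj2 : ((j : ℕ) : ℝ) + 1 ≤ n' := by exact_mod_cast j.2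
  have hj0 : (0 : ℝ) ≤ ((j : ℕ) : ℝ) := by positivity
  constructor
  · refine le_trans ?_ hj.1
    rw [div_le_div_iff₀ hP hn0, hn]
    nlinarith
  · have : x ≤ (n' + (j : ℕ)) / n + 1 / n := by linarith [hj.2]
    refine this.trans ?_
    rw [← add_div, div_le_div_iff₀ hn0 hP, hn]
    nlinarith

theorem center_range {n' : ℕ} (hn' : 1 ≤ n') {P n : ℝ} (hP : 0 < P) (hn : n = n' * P) (j : Fin n') :
    1 / P ≤ ((n' : ℝ) + (j : ℕ)) / n ∧ ((n' : ℝ) + (j : ℕ)) / n ≤ 2 / P := by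
  have hn'0 : (0 : ℝ) < n' := by exact_mod_cast hn'
  have hn0 : 0 < n := by rw [hn]; positivity
  have hj2 : ((j : ℕ) : ℝ) + 1 ≤ n' := by exact_mod_cast j.2
  have hj0 : (0 : ℝ) ≤ ((j : ℕ) : ℝ) := by positivity
  constructor
  · rw [div_le_div_iff₀ hP hn0, hn]
    nlinarith
  · rw [div_le_div_iff₀ hn0 hP, hn]
    nlinarith

theorem gap_aux {P Q x p : ℝ} (hP : 0 < P) (hQ : 0 < Q) (h : 4 * P ≤ Q ∨ 4 * Q ≤ P)
    (hx : 1 / Q ≤ x ∧ x ≤ 2 / Q) (hp : 1 / P ≤ p ∧ p ≤ 2 / P) : 1 / (2 * P) ≤ |x - p| := by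
  have e : 1 / (2 * P) = (1 / P) / 2 := by field_simp
  have hP' : 0 < 1 / P := by positivity
  have e2 : 2 / P = 2 * (1 / P) := by ring
  rcases h with h | h
  · have : 2 / Q ≤ (1 / P) / 2 := by
      rw [← e, div_le_div_iff₀ hQ (by positivity)]; linarith
    rw [abs_sub_comm, e]
    refine le_trans ?_ (le_abs_self _)
    linarith
  · have : 4 * (1 / P) ≤ 1 / Q := by
      rw [mul_one_div, div_le_div_iff₀ hP hQ]; linarith
    rw [e]
    refine le_trans ?_ (le_abs_self _)
    linarith

/-- centers -/
noncomputable def cen (d n' : ℕ) (n : ℝ) (j : Fin d → Fin n') : EuclideanSpace ℝ (Fin d) :=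
  WithLp.toLp 2 fun i => ((n' : ℝ) + (j i : ℕ)) / n

theorem cen_inj {d n' : ℕ} {n : ℝ} (hn : 0 < n) {j j' : Fin d → Fin n'} (h : cen d n' n j = cen d n' n j') :
    j = j' := by
  funext i
  have h1 := congrArg (fun v : EuclideanSpace ℝ (Fin d) => v i) h
  simp only [cen] at h1
  rw [div_left_inj' hn.ne', add_right_inj] at h1
  exact Fin.ext (by exact_mod_cast h1)

theorem cen_int {d n' : ℕ} {n q : ℕ} (hn : 0 < n) (j j' : Fin d → Fin n') (i : Fin d) :
    ∃ z : ℤ, ((n * q : ℕ) : ℝ) * (cen d n' n j i - cen d n' n j' i) = z := by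
  refine ⟨q * ((j i : ℕ) - (j' i : ℕ)), ?_⟩
  have : (n : ℝ) ≠ 0 := by exact_mod_cast hn.ne'
  simp only [cen]
  push_cast
  field_simp
  ring

/-- Let `d ≥ 1`, `m ∈ (0,∞) \ {1}`, `0 < α ≤ d`, `0 ≤ s < d/2`, `β ≥ 1`
with `d - 2s > α/β`.  Then there exist an `α`-dimensional probability measure `μ` supported
in the unit ball, an orthonormal system `(f_j)` in `Ḣ^s(ℝ^d)` (parametrized on the Fourier
side by `g_j = f̂_j`), and a nonnegative sequence `λ ∈ ℓ^β` for which the maximal estimate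
`‖∑_j λ_j |e^{it(-Δ)^{m/2}}f_j|²‖_{L¹_x(dμ)L^∞_t(0,1)} ≲ ‖λ‖_{ℓ^β}` fails (the left-hand
side is infinite while the right-hand side is finite and nonzero).  Equivalently,
`d - 2s ≤ α/β` is necessary for the maximal estimate. -/
theorem statement14 (d : ℕ) (hd : 1 ≤ d) (m : ℝ) (hm0 : 0 < m) (hm1 : m ≠ 1)
    (α : ℝ) (hα0 : 0 < α) (hαd : α ≤ d) (s : ℝ) (hs0 : 0 ≤ s) (hs : s < d / 2)
    (β : ℝ) (hβ : 1 ≤ β) (hnec : α / β < d - 2 * s) :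
    ∃ (μ : Measure (EuclideanSpace ℝ (Fin d))), IsProbabilityMeasure μ ∧
      μ (Metric.closedBall (0 : EuclideanSpace ℝ (Fin d)) 1)ᶜ = 0 ∧
      (∃ A : ℝ, 0 < A ∧ ∀ (x : EuclideanSpace ℝ (Fin d)) (r : ℝ), 0 < r →
        μ (Metric.ball x r) ≤ ENNReal.ofReal (A * r ^ α)) ∧
      ∃ (g : ℕ → EuclideanSpace ℝ (Fin d) → ℂ),
        -- orthonormality of the data in `Ḣ^s`, on the Fourier side
        (∀ i j, ∫ ξ, ((‖ξ‖ ^ (2 * s) : ℝ) : ℂ) * (g i ξ * (starRingEnd ℂ) (g j ξ)) =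
            if i = j then 1 else 0) ∧
        ∃ lam : ℕ → ℝ, (∀ j, 0 ≤ lam j) ∧
          (∑' j, ENNReal.ofReal (lam j) ^ β) < ∞ ∧
          0 < (∑' j, ENNReal.ofReal (lam j) ^ β) ∧
          ∫⁻ x, (⨆ t : Set.Ioo (0 : ℝ) 1,
              ENNReal.ofReal (∑' j, lam j * ‖fracEvol d m (g j) t x‖ ^ 2)) ∂μ = ∞ := by
  have hd0 : (0 : ℝ) < d := by exact_mod_cast hd
  have hpi := Real.pi_pos
  obtain ⟨c, c0, hc, hc1, hc0, hlow⟩ := Dker_lower hd hs0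
  set θ := α / d with hθdef
  have hθ : 0 < θ := by positivity
  have hθ1 : θ ≤ 1 := by rw [hθdef, div_le_one hd0]; exact hαd
  have hdθ : d * θ = α := by rw [hθdef]; field_simp
  set P : ℕ → ℕ := fun k => d * 4 ^ (k + 1) with hPdef
  have hP1 : ∀ k, 1 ≤ P k := fun k => Nat.mul_pos hd (by positivity)
  have hP1' : ∀ k, (1 : ℝ) ≤ P k := fun k => by exact_mod_cast hP1 k
  have hP0 : ∀ k, (0 : ℝ) < P k := fun k => by linarith [hP1' k]
  set A : ℕ → ℝ := fun k => (10 * P k / c) ^ d with hAdef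
  have hA1 : ∀ k, 1 ≤ A k := fun k => by
    apply one_le_pow₀
    rw [le_div_iff₀ hc]; linarith [hP1' k]
  set M : ℕ → ℝ := fun k => 2 ^ k * A k / c0 with hMdef
  have hM : ∀ k, 0 < M k := fun k => by have := hA1 k; positivity
  set C : ℝ := (2 * Real.pi) ^ d with hCdef
  have hC : 0 < C := by positivity
  have hex : ∀ k, ∀ᶠ l : ℕ in Filter.atTop,
      ENNReal.ofReal (M k) * (∫⁻ y in {y : EuclideanSpace ℝ (Fin d) |
        (Nfun θ (2 ^ l * P k) : ℝ) * (1 / (2 * P k)) ≤ |y ⟨0, hd⟩|},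
        ENNReal.ofReal (‖Dker d s y‖ ^ 2)) ≤ ENNReal.ofReal ((1 / 2) ^ k) ∧
      (Nfun θ (2 ^ l * P k) : ℝ) ^ α * (M k * C * (Nfun θ (2 ^ l * P k) : ℝ) ^ (-((d : ℝ) - 2 * s))) ^ β
        ≤ (1 / 2) ^ k := by
    intro k
    have h1 := good_eventually hd hs0 hβ hnec (M k) C (1 / (2 * P k)) ((1 / 2) ^ k) (hM k) hC
      (by have := hP0 k; positivity) (by positivity)
    refine Filter.Tendsto.eventually ?_ h1
    refine Filter.tendsto_atTop_mono (fun l => ?_) tendsto_natCast_atTop_atTop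
    have h2 : 1 ≤ 2 ^ l * P k := Nat.mul_pos (by positivity) (hP1 k)
    have h3 := (Nfun_props hθ hθ1 h2).1
    have h4 : l ≤ 2 ^ l * P k := (Nat.lt_two_pow_self).le.trans (Nat.le_mul_of_pos_right _ (hP1 k))
    exact_mod_cast h4.trans h3
  obtain ⟨l, hl, hgood⟩ := Filter.extraction_forall_of_eventually hex
  set n : ℕ → ℕ := fun k => 2 ^ l k * P k with hndef
  set N : ℕ → ℕ := fun k => Nfun θ (n k) with hNdef
  have hn1 : ∀ k, 1 ≤ n k := fun k => Nat.mul_pos (by positivity) (hP1 k)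
  have hn0 : ∀ k, (0 : ℝ) < n k := fun k => by exact_mod_cast hn1 k
  have hnN : ∀ k, (n k : ℝ) ≤ N k := fun k => by exact_mod_cast (Nfun_props hθ hθ1 (hn1 k)).1
  have hN0 : ∀ k, (0 : ℝ) < N k := fun k => (hn0 k).trans_le (hnN k)
  have hncast : ∀ k, (n k : ℝ) = ((2 ^ l k : ℕ) : ℝ) * (P k : ℝ) := fun k => by
    rw [hndef]; push_cast; ring
  have hn'1 : ∀ k, 1 ≤ 2 ^ l k := fun k => Nat.one_le_two_pow
  have hn'n : ∀ k, ((2 ^ l k : ℕ) : ℝ) ≤ n k := fun k => by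
    exact_mod_cast Nat.le_mul_of_pos_right _ (hP1 k)
  have hPmono : ∀ i k, i < k → 4 * P i ≤ P k := by
    intro i k hik
    simp only [hPdef]
    calc 4 * (d * 4 ^ (i + 1)) = d * 4 ^ (i + 1 + 1) := by ring
      _ ≤ _ := by gcongr <;> omega
  have hNmono : ∀ i k, i < k → 2 * N i ≤ N k := by
    intro i k hik
    apply Nfun_double hθ hθ1
    simp only [hndef]
    have h1 : l i + 1 ≤ l k := hl hik
    calc 2 * (2 ^ l i * P i) = 2 ^ (l i + 1) * P i := by ring
      _ ≤ 2 ^ l k * P k := Nat.mul_le_mul (Nat.pow_le_pow_right (by norm_num) h1)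
        (by have := hPmono i k hik; omega)
  set S : ℕ → Set ℝ := fun k => Sset (2 ^ l k) (n k) (N k) c with hSdef
  have hSm : ∀ k, MeasurableSet (S k) := fun k => Sset_meas _ _ _ _
  have hSr : ∀ k, ∀ x ∈ S k, 1 / (P k : ℝ) ≤ x ∧ x ≤ 2 / (P k : ℝ) := fun k x hx =>
    Sset_range (hn'1 k) (hP0 k) (hncast k) (hnN k) hc1 hx
  have hSvol : ∀ k, volume (S k) = ENNReal.ofReal (((2 ^ l k : ℕ) : ℝ) * (c / N k)) := fun k =>
    Sset_vol _ (hn0 k) (hnN k) hc1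
  set cc : (k : ℕ) → (Fin d → Fin (2 ^ l k)) → EuclideanSpace ℝ (Fin d) :=
    fun k j => cen d (2 ^ l k) (n k) j with hccdef
  set ρ : ℕ → EuclideanSpace ℝ (Fin d) → ℝ≥0∞ := fun k x =>
    ∑ j : Fin d → Fin (2 ^ l k), ENNReal.ofReal (M k * ‖Dker d s ((N k : ℝ) • (x - cc k j))‖ ^ 2) with hρdef
  have hDm := (Dker_cont hd hs0).measurable
  have hDm' : ∀ k j, Measurable fun x => ENNReal.ofReal (‖Dker d s ((N k : ℝ) • (x - cc k j))‖ ^ 2) := by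
    intro k j; fun_prop
  have hρsplit : ∀ k x, ρ k x = ∑ j : Fin d → Fin (2 ^ l k),
      ENNReal.ofReal (M k) * ENNReal.ofReal (‖Dker d s ((N k : ℝ) • (x - cc k j))‖ ^ 2) := by
    intro k x
    simp only [hρdef]
    refine Finset.sum_congr rfl fun j _ => ?_
    rw [ENNReal.ofReal_mul (hM k).le]
  obtain ⟨μ, hμp, hμs, hμA, hμfin, hμtop⟩ := assembly_lemma (fun k => Eset d (S k))
    (fun k => Eset_meas d (hSm k))
    (fun k => by
      rw [Eset_vol d (hSm k), hSvol]
      have h1 := hN0 k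
      have : (0 : ℝ) < ((2 ^ l k : ℕ) : ℝ) := by exact_mod_cast hn'1 k
      exact pow_ne_zero _ (ENNReal.ofReal_pos.2 (by positivity)).ne')
    (fun k => by
      rw [Eset_vol d (hSm k), hSvol]
      exact ENNReal.pow_ne_top ENNReal.ofReal_ne_top)
    (fun k x hx => by
      rw [mem_closedBall_zero_iff]
      have h1 : ∀ i, ‖x i‖ ≤ 1 / (d : ℝ) := by
        intro i
        have h2 := hSr k _ (hx i)
        have h3 : 0 < 1 / (P k : ℝ) := by have := hP0 k; positivity
        rw [Real.norm_of_nonneg (h3.le.trans h2.1)]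
        refine h2.2.trans ?_
        rw [div_le_div_iff₀ (hP0 k) hd0]
        have : 4 * d ≤ P k := by
          simp only [hPdef]
          rw [pow_succ]
          have : 1 ≤ 4 ^ k := Nat.one_le_pow _ _ (by norm_num)
          nlinarith
        have : 4 * (d : ℝ) ≤ P k := by exact_mod_cast this
        linarith
      rw [EuclideanSpace.norm_eq]
      refine Real.sqrt_le_iff.2 ⟨zero_le_one, ?_⟩
      rw [one_pow]
      calc ∑ i, ‖x i‖ ^ 2 ≤ ∑ _i : Fin d, (1 / (d : ℝ)) := by
            refine Finset.sum_le_sum fun i _ => ?_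
            have h2 := h1 i
            have h3 : 1 / (d : ℝ) ≤ 1 := by
              rw [div_le_one hd0]; exact_mod_cast hd
            nlinarith [norm_nonneg (x i)]
        _ = 1 := by simp; field_simp)
    A hA1 α
    (fun k x r hr => by
      have := Eset_bound d (hSm k) (B := 10 * P k / c) (θ := θ) (by have := hP0 k; positivity)
        (fun a r hr => Sset_bound (2 ^ l k) (hn'1 k) (hP1' k) (hncast k) (hnN k) hc hc1 hθ hθ1
          (Nfun_props hθ hθ1 (hn1 k)).2.2 a r hr) x r hr
      rw [hdθ] at this
      exact this)
    ρ
    (fun k => by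
      simp only [hρdef]
      fun_prop)
    (fun k x => by
      simp only [hρdef]
      exact (ENNReal.sum_lt_top.2 fun j _ => ENNReal.ofReal_lt_top).ne)
    (fun k x hx => by
      have h1 : ∀ i, ∃ j : Fin (2 ^ l k), x i ∈ Set.Ico ((((2 ^ l k : ℕ) : ℝ) + (j : ℕ)) / n k)
          ((((2 ^ l k : ℕ) : ℝ) + (j : ℕ)) / n k + c / N k) := fun i => mem_iUnion.1 (hx i)
      choose j hj using h1
      have h2 : c0 ≤ ‖Dker d s ((N k : ℝ) • (x - cc k j))‖ ^ 2 := by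
        apply hlow
        intro i
        have h3 := hj i
        have h4 : ((N k : ℝ) • (x - cc k j)) i = N k * (x i - (((2 ^ l k : ℕ) : ℝ) + (j i : ℕ)) / n k) := rfl
        rw [h4, abs_of_nonneg (mul_nonneg (hN0 k).le (by linarith [h3.1]))]
        calc _ ≤ (N k : ℝ) * (c / N k) := by
              apply mul_le_mul_of_nonneg_left _ (hN0 k).le
              linarith [h3.2]
          _ = c := by have := (hN0 k).ne'; field_simp
      simp only [hρdef]
      refine le_trans ?_ (Finset.single_le_sum (f := fun j => ENNReal.ofReal
        (M k * ‖Dker d s ((N k : ℝ) • (x - cc k j))‖ ^ 2)) (fun _ _ => zero_le) (Finset.mem_univ j))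
      apply ENNReal.ofReal_le_ofReal
      calc 2 ^ k * A k = M k * c0 := by simp only [hMdef]; field_simp
        _ ≤ _ := mul_le_mul_of_nonneg_left h2 (hM k).le)
    (fun i k hik => by
      simp only [hρsplit]
      rw [lintegral_finsetSum _ (fun j _ => (hDm' k j).const_mul _)]
      set T := ∫⁻ y in {y : EuclideanSpace ℝ (Fin d) |
        (N k : ℝ) * (1 / (2 * P k)) ≤ |y ⟨0, hd⟩|}, ENNReal.ofReal (‖Dker d s y‖ ^ 2) with hT
      have h1 : ∀ j : Fin d → Fin (2 ^ l k), ∫⁻ x in Eset d (S i), ENNReal.ofReal (M k) *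
          ENNReal.ofReal (‖Dker d s ((N k : ℝ) • (x - cc k j))‖ ^ 2) ≤
          ENNReal.ofReal (M k) * (ENNReal.ofReal (((N k : ℝ) ^ d)⁻¹) * T) := by
        intro j
        rw [lintegral_const_mul _ (hDm' k j)]
        gcongr
        rw [hT, ← Dker_tail_scaled hd hs0 (hN0 k) _ (cc k j)]
        apply lintegral_mono_set
        intro x hx
        have h2 := hSr i _ (hx ⟨0, hd⟩)
        have h3 := center_range (hn'1 k) (hP0 k) (hncast k) (j ⟨0, hd⟩)
        refine gap_aux (hP0 k) (hP0 i) ?_ h2 h3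
        rcases lt_or_gt_of_ne hik with h | h
        · right; exact_mod_cast hPmono i k h
        · left; exact_mod_cast hPmono k i h
      calc _ ≤ ∑ _j : Fin d → Fin (2 ^ l k), ENNReal.ofReal (M k) * (ENNReal.ofReal (((N k : ℝ) ^ d)⁻¹) * T) :=
            Finset.sum_le_sum fun j _ => h1 j
        _ = (ENNReal.ofReal (((2 ^ l k : ℕ) : ℝ) ^ d) * ENNReal.ofReal (((N k : ℝ) ^ d)⁻¹)) *
            (ENNReal.ofReal (M k) * T) := by
            have hcast : ENNReal.ofReal (((2 ^ l k : ℕ) : ℝ) ^ d) = (((2 ^ l k) ^ d : ℕ) : ℝ≥0∞) := by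
              rw [← Nat.cast_pow, ENNReal.ofReal_natCast]
            rw [Finset.sum_const, nsmul_eq_mul, Finset.card_univ, Fintype.card_fun, Fintype.card_fin,
              Fintype.card_fin, hcast]
            ring
        _ ≤ 1 * (ENNReal.ofReal (M k) * T) := by
            gcongr
            rw [← ENNReal.ofReal_mul (by positivity), ← ENNReal.ofReal_one]
            apply ENNReal.ofReal_le_ofReal
            have := hN0 k
            rw [← div_eq_mul_inv, div_le_one (by positivity)]
            gcongr
            exact_mod_cast (hn'n k).trans (hnN k)
        _ ≤ _ := by rw [one_mul]; exact (hgood k).1)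
  refine ⟨μ, hμp, hμs, hμA, ?_⟩
  -- enumeration of the indices
  have hinf : Infinite (Σ k : ℕ, (Fin d → Fin (2 ^ l k))) :=
    Infinite.of_injective (fun k : ℕ => (⟨k, fun _ => ⟨0, hn'1 k⟩⟩ : Σ k : ℕ, (Fin d → Fin (2 ^ l k))))
      (fun a b h => congrArg Sigma.fst h)
  obtain ⟨hden⟩ := nonempty_denumerable (Σ k : ℕ, (Fin d → Fin (2 ^ l k)))
  let e : ℕ ≃ (Σ k : ℕ, (Fin d → Fin (2 ^ l k))) := (Denumerable.eqv _).symm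
  set lamk : ℕ → ℝ := fun k => M k * C * (N k : ℝ) ^ (-((d : ℝ) - 2 * s)) with hlamdef
  have hlampos : ∀ k, 0 < lamk k := fun k => by
    have h1 := hM k
    have h2 := hN0 k
    positivity
  have hterm : ∀ (a : Σ k : ℕ, (Fin d → Fin (2 ^ l k))) x,
      lamk a.1 * ‖fracEvol d m (gfun d m s (N a.1) (cc a.1 a.2)) (1 / 2) x‖ ^ 2 =
      M a.1 * ‖Dker d s ((N a.1 : ℝ) • (x - cc a.1 a.2))‖ ^ 2 := by
    intro a x
    rw [fracEvol_gfun m s (hN0 a.1)]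
    simp only [hlamdef]
    have h1 : (N a.1 : ℝ) ^ (-((d : ℝ) - 2 * s)) * (N a.1 : ℝ) ^ ((d : ℝ) - 2 * s) = 1 := by
      rw [← Real.rpow_add (hN0 a.1)]; simp
    have h2 : C * ((2 * Real.pi) ^ d)⁻¹ = 1 := mul_inv_cancel₀ hC.ne'
    linear_combination (M a.1 * ‖Dker d s ((N a.1 : ℝ) • (x - cc a.1 a.2))‖ ^ 2) *
      (C * ((2 * Real.pi) ^ d)⁻¹ * h1 + h2)
  refine ⟨fun j => gfun d m s (N (e j).1) (cc (e j).1 (e j).2), ?_, fun j => lamk (e j).1,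
    fun j => (hlampos _).le, ?_, ?_, ?_⟩
  · intro i j
    by_cases hij : i = j
    · subst hij
      simp only [if_true]
      exact gfun_norm hd m s (hN0 _) _
    · rw [if_neg hij]
      have hne : e i ≠ e j := fun h => hij (e.injective h)
      beta_reduce
      generalize e i = a at hne ⊢
      generalize e j = b at hne ⊢
      obtain ⟨k, ja⟩ := a
      obtain ⟨k', jb⟩ := b
      by_cases hk : k = k'
      · subst hk
        apply gfun_ortho_same hd m s (hN0 k)
        · intro h
          have hja : ja = jb := cen_inj (hn0 k) h
          exact hne (by rw [hja])
        · intro i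
          exact cen_int (hn1 k) ja jb i
      · apply gfun_ortho_diff hd
        rcases lt_or_gt_of_ne hk with h | h
        · left; exact_mod_cast hNmono k k' h
        · right; exact_mod_cast hNmono k' k h
  · rw [e.tsum_eq (fun a => ENNReal.ofReal (lamk a.1) ^ β), ENNReal.tsum_sigma']
    have hgeo : ∑' k : ℕ, ENNReal.ofReal ((1 / 2) ^ k) < ∞ := by
      rw [← ENNReal.ofReal_tsum_of_nonneg (fun k => by positivity) summable_geometric_two]
      exact ENNReal.ofReal_lt_top
    refine lt_of_le_of_lt (ENNReal.tsum_le_tsum fun k => ?_) hgeo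
    rw [tsum_fintype]
    dsimp only
    rw [Finset.sum_const, nsmul_eq_mul, Finset.card_univ, Fintype.card_fun, Fintype.card_fin,
      Fintype.card_fin, ENNReal.ofReal_rpow_of_pos (hlampos k), ← ENNReal.ofReal_natCast,
      ← ENNReal.ofReal_mul (by positivity)]
    apply ENNReal.ofReal_le_ofReal
    refine le_trans ?_ (hgood k).2
    have h1 : (((2 ^ l k) ^ d : ℕ) : ℝ) ≤ (N k : ℝ) ^ α := by
      rw [Nat.cast_pow, ← hdθ, mul_comm (d : ℝ), Real.rpow_mul (hN0 k).le, Real.rpow_natCast]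
      gcongr
      exact (hn'n k).trans (Nfun_props hθ hθ1 (hn1 k)).2.1
    have h2 : 0 ≤ lamk k ^ β := Real.rpow_nonneg (hlampos k).le _
    exact mul_le_mul_of_nonneg_right h1 h2
  · refine lt_of_lt_of_le ?_ (ENNReal.le_tsum 0)
    rw [ENNReal.ofReal_rpow_of_pos (hlampos _)]
    exact ENNReal.ofReal_pos.2 (Real.rpow_pos_of_pos (hlampos _) _)
  · rw [eq_top_iff, ← hμtop]
    apply lintegral_mono_ae
    filter_upwards [hμfin] with x hx
    refine le_trans ?_ (le_iSup _ (⟨1 / 2, by norm_num, by norm_num⟩ : Set.Ioo (0 : ℝ) 1))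
    have hsum : ∑' j : ℕ, ENNReal.ofReal (lamk (e j).1 *
        ‖fracEvol d m (gfun d m s (N (e j).1) (cc (e j).1 (e j).2)) (1 / 2) x‖ ^ 2) = ∑' k, ρ k x := by
      simp only [hterm]
      rw [e.tsum_eq (fun a => ENNReal.ofReal (M a.1 * ‖Dker d s ((N a.1 : ℝ) • (x - cc a.1 a.2))‖ ^ 2)),
        ENNReal.tsum_sigma']
      simp only [tsum_fintype, hρdef]
    have hnn : ∀ j : ℕ, 0 ≤ lamk (e j).1 *
        ‖fracEvol d m (gfun d m s (N (e j).1) (cc (e j).1 (e j).2)) (1 / 2) x‖ ^ 2 := fun j =>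
      mul_nonneg (hlampos _).le (by positivity)
    have hsummable : Summable fun j : ℕ => lamk (e j).1 *
        ‖fracEvol d m (gfun d m s (N (e j).1) (cc (e j).1 (e j).2)) (1 / 2) x‖ ^ 2 := by
      have h1 := ENNReal.summable_toReal (hsum ▸ hx.ne)
      refine h1.congr fun j => ?_
      exact ENNReal.toReal_ofReal (hnn j)
    rw [← hsum, ← ENNReal.ofReal_tsum_of_nonneg hnn hsummable]
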